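/- arXiv:math/0210228 — 2 statements merged into one kernel-verified Lean document; each statement's English description precedes it below -/
import Mathlib

section
/- Let p > 2, let A be a countably infinite set, and let X be the Banach space X(𝒫) where 𝒫 consists of a single partition–weight pair (P, W) on A. Then X is isomorphic (via a bounded linear bijection with bounded inverse) to one of the following spaces: ℓ_p, ℓ_2, ℓ_2 ⊕ ℓ_p, or the ℓ_p-sum (Σ ℓ_2)_{ℓ_p} of countably many copies of ℓ_2. -/
open scoped ENNReal
open MeasureTheory Filter

noncomputable section

variable {α : Type*}

/-- `P` is a partition of the type `α`: a collection of pairwise disjoint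
nonempty subsets of `α` whose union is all of `α`. -/
def IsPartition (P : Set (Set α)) : Prop :=
  (∀ N ∈ P, N.Nonempty) ∧ P.PairwiseDisjoint id ∧ ⋃₀ P = Set.univ

/-- A weight function takes values in `(0,1]`. -/
def IsWeight (W : α → ℝ) : Prop := ∀ a, W a ∈ Set.Ioc (0 : ℝ) 1

/-- `‖x‖_{P,W} = (Σ_{N∈P} (Σ_{j∈N} x_j² w_j²)^{p/2})^{1/p}`, valued in `[0,∞]`. -/
def pwNorm (p : ℝ) (P : Set (Set α)) (W : α → ℝ) (x : α → ℝ) : ℝ≥0∞ :=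
  (∑' N : P, (∑' j : N.1, ENNReal.ofReal ((x j.1) ^ 2 * (W j.1) ^ 2)) ^ (p / 2)) ^ (1 / p)

/-- A partition–weight pair on `α`. -/
abbrev PWPair (α : Type*) := Set (Set α) × (α → ℝ)

/-- Every member of the family is a genuine partition–weight pair. -/
def IsPWFamily (𝒞 : Set (PWPair α)) : Prop :=
  ∀ PW ∈ 𝒞, IsPartition PW.1 ∧ IsWeight PW.2

/-- `‖x‖_𝒞 = sup_{(P,W) ∈ 𝒞} ‖x‖_{P,W}`. -/
def famNorm (p : ℝ) (𝒞 : Set (PWPair α)) (x : α → ℝ) : ℝ≥0∞ :=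
  ⨆ PW ∈ 𝒞, pwNorm p PW.1 PW.2 x

/-- `X(𝒞)` (the space of `x : α → ℝ` with `famNorm p 𝒞 x < ∞`) is isomorphic to the
normed space `E` via a bounded linear bijection with bounded inverse: there is a map
`R`, additive and homogeneous on `X(𝒞)`, onto `E`, with two-sided norm estimates. -/
def IsomorphicToPW (p : ℝ) (𝒞 : Set (PWPair α)) (E : Type*)
    [NormedAddCommGroup E] [NormedSpace ℝ E] : Prop :=
  ∃ (R : (α → ℝ) → E) (c C : ℝ), 0 < c ∧
    (∀ x y, famNorm p 𝒞 x < ⊤ → famNorm p 𝒞 y < ⊤ → R (x + y) = R x + R y) ∧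
    (∀ (r : ℝ) (x), famNorm p 𝒞 x < ⊤ → R (r • x) = r • R x) ∧
    (∀ e : E, ∃ x, famNorm p 𝒞 x < ⊤ ∧ R x = e) ∧
    (∀ x, famNorm p 𝒞 x < ⊤ →
      ENNReal.ofReal c * famNorm p 𝒞 x ≤ ENNReal.ofReal ‖R x‖ ∧
      ENNReal.ofReal ‖R x‖ ≤ ENNReal.ofReal C * famNorm p 𝒞 x)

open scoped NNReal

/-- Two gauges on real vector spaces are equivalent with constant `C` if a linear bijection
distorts them by a factor of at most `C`. A gauge is any `[0,∞]`-valued function; the ones of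
interest are `p`-th powers of extended norms, so that `ℓ_p`-sums become plain sums. -/
def GaugeEquivWith {V V' : Type*} [AddCommGroup V] [Module ℝ V] [AddCommGroup V'] [Module ℝ V']
    (C : ℝ≥0) (G : V → ℝ≥0∞) (G' : V' → ℝ≥0∞) : Prop :=
  ∃ T : V ≃ₗ[ℝ] V', ∀ x, G' (T x) ≤ C * G x ∧ G x ≤ C * G' (T x)

/-- Equivalence of gauges with some constant. -/
def GaugeEquiv {V V' : Type*} [AddCommGroup V] [Module ℝ V] [AddCommGroup V'] [Module ℝ V']
    (G : V → ℝ≥0∞) (G' : V' → ℝ≥0∞) : Prop :=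
  ∃ C, GaugeEquivWith C G G'

/-- The direct sum of a family of gauges. -/
def sumGauge {ι : Type*} {V : ι → Type*} (G : ∀ i, V i → ℝ≥0∞) (x : ∀ i, V i) : ℝ≥0∞ :=
  ∑' i, G i (x i)

/-- The direct sum of two gauges. -/
def prodGauge {V V' : Type*} (G : V → ℝ≥0∞) (G' : V' → ℝ≥0∞) (x : V × V') : ℝ≥0∞ :=
  G x.1 + G' x.2

/-- The `p`-th power of the absolute value. -/
def scalarGauge (p : ℝ) (x : ℝ) : ℝ≥0∞ := ‖x‖ₑ ^ p

/-- The `p`-th power of the norm of `ℓ_p(S)`. -/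
def lpGauge (p : ℝ) (S : Type*) : (S → ℝ) → ℝ≥0∞ := sumGauge fun _ => scalarGauge p

/-- The `p`-th power of the norm of `ℓ_2(S)`. -/
def hilbertGauge (p : ℝ) (S : Type*) (x : S → ℝ) : ℝ≥0∞ := (∑' j, ‖x j‖ₑ ^ 2) ^ (p / 2)

lemma sum_rpow_le_rpow_sum {ι : Type*} {q : ℝ} (hq : 1 ≤ q) (s : Finset ι) (a : ι → ℝ≥0∞) :
    ∑ i ∈ s, a i ^ q ≤ (∑ i ∈ s, a i) ^ q := by
  induction s using Finset.cons_induction with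
  | empty => simp
  | cons i s hi ih =>
    rw [Finset.sum_cons, Finset.sum_cons]
    exact (add_le_add_right ih _).trans (ENNReal.add_rpow_le_rpow_add _ _ hq)

lemma rpow_sum_le_card_rpow_mul_sum_rpow {ι : Type*} [Fintype ι] {q : ℝ} (hq : 0 < q)
    (a : ι → ℝ≥0∞) :
    (∑ i, a i) ^ q ≤ (Fintype.card ι : ℝ≥0∞) ^ q * ∑ i, a i ^ q := by
  have h : ∀ i, a i ≤ (∑ i, a i ^ q) ^ q⁻¹ := fun i => by
    rw [ENNReal.le_rpow_inv_iff hq]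
    exact Finset.single_le_sum (f := fun i => a i ^ q) (fun _ _ => zero_le) (Finset.mem_univ i)
  calc (∑ i, a i) ^ q ≤ (Fintype.card ι * (∑ i, a i ^ q) ^ q⁻¹) ^ q := by
        gcongr
        simpa using Finset.sum_le_card_nsmul Finset.univ a _ fun i _ => h i
    _ = _ := by rw [ENNReal.mul_rpow_of_nonneg _ _ hq.le, ENNReal.rpow_inv_rpow hq.ne']

section Gauge

variable {V V' V'' U U' : Type*} [AddCommGroup V] [Module ℝ V] [AddCommGroup V'] [Module ℝ V']
  [AddCommGroup V''] [Module ℝ V''] [AddCommGroup U] [Module ℝ U] [AddCommGroup U'] [Module ℝ U']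
  {G : V → ℝ≥0∞} {G' : V' → ℝ≥0∞} {G'' : V'' → ℝ≥0∞} {H : U → ℝ≥0∞} {H' : U' → ℝ≥0∞}
  {ι κ : Type*} {p : ℝ}

lemma GaugeEquivWith.gaugeEquiv {C : ℝ≥0} (h : GaugeEquivWith C G G') : GaugeEquiv G G' := ⟨C, h⟩

lemma gaugeEquivWith_of_eq (T : V ≃ₗ[ℝ] V') (h : ∀ x, G' (T x) = G x) :
    GaugeEquivWith 1 G G' := ⟨T, fun x => by simp [h]⟩

lemma gaugeEquiv_of_eq (T : V ≃ₗ[ℝ] V') (h : ∀ x, G' (T x) = G x) : GaugeEquiv G G' :=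
  (gaugeEquivWith_of_eq T h).gaugeEquiv

lemma GaugeEquivWith.symm {C : ℝ≥0} : GaugeEquivWith C G G' → GaugeEquivWith C G' G
  | ⟨T, h⟩ => ⟨T.symm, fun x => by simpa using (h (T.symm x)).symm⟩

lemma GaugeEquivWith.trans {C D : ℝ≥0} :
    GaugeEquivWith C G G' → GaugeEquivWith D G' G'' → GaugeEquivWith (C * D) G G''
  | ⟨T, h⟩, ⟨T', h'⟩ => by
    refine ⟨T.trans T', fun x => ⟨?_, ?_⟩⟩
    · calc G'' (T' (T x)) ≤ D * G' (T x) := (h' _).1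
        _ ≤ D * (C * G x) := by gcongr; exact (h x).1
        _ = _ := by push_cast; ring
    · calc G x ≤ C * G' (T x) := (h x).2
        _ ≤ C * (D * G'' (T' (T x))) := by gcongr; exact (h' _).2
        _ = _ := by simp [mul_assoc]

lemma GaugeEquiv.refl (G : V → ℝ≥0∞) : GaugeEquiv G G :=
  gaugeEquiv_of_eq (.refl ℝ V) fun _ => rfl

lemma GaugeEquiv.symm : GaugeEquiv G G' → GaugeEquiv G' G
  | ⟨_, h⟩ => h.symm.gaugeEquiv

lemma GaugeEquiv.trans : GaugeEquiv G G' → GaugeEquiv G' G'' → GaugeEquiv G G''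
  | ⟨_, h⟩, ⟨_, h'⟩ => (h.trans h').gaugeEquiv

lemma GaugeEquiv.prodGauge : GaugeEquiv G G' → GaugeEquiv H H' →
    GaugeEquiv (prodGauge G H) (prodGauge G' H')
  | ⟨C, T, h⟩, ⟨D, S, h'⟩ => by
    refine ⟨C + D, T.prodCongr S, fun x => ⟨?_, ?_⟩⟩
    · calc G' (T x.1) + H' (S x.2) ≤ C * G x.1 + D * H x.2 := add_le_add (h _).1 (h' _).1
        _ ≤ (C + D) * G x.1 + (C + D) * H x.2 := by gcongr <;> simp
        _ = _ := by simp [_root_.prodGauge, mul_add]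
    · calc G x.1 + H x.2 ≤ C * G' (T x.1) + D * H' (S x.2) := add_le_add (h _).2 (h' _).2
        _ ≤ (C + D) * G' (T x.1) + (C + D) * H' (S x.2) := by gcongr <;> simp
        _ = _ := by simp [_root_.prodGauge, mul_add]

lemma prodGauge_comm (G : V → ℝ≥0∞) (G' : V' → ℝ≥0∞) :
    GaugeEquiv (prodGauge G G') (prodGauge G' G) :=
  gaugeEquiv_of_eq (.prodComm ℝ V V') fun _ => add_comm _ _

lemma prodGauge_assoc (G : V → ℝ≥0∞) (G' : V' → ℝ≥0∞) (G'' : V'' → ℝ≥0∞) :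
    GaugeEquiv (prodGauge (prodGauge G G') G'') (prodGauge G (prodGauge G' G'')) :=
  gaugeEquiv_of_eq (.prodAssoc ℝ V V' V'') fun _ => (add_assoc _ _ _).symm

variable {E F : ι → Type*} [∀ i, AddCommGroup (E i)] [∀ i, Module ℝ (E i)]
  [∀ i, AddCommGroup (F i)] [∀ i, Module ℝ (F i)]

lemma sumGauge_congr {C : ℝ≥0} {A : ∀ i, E i → ℝ≥0∞} {B : ∀ i, F i → ℝ≥0∞}
    (h : ∀ i, GaugeEquivWith C (A i) (B i)) : GaugeEquiv (sumGauge A) (sumGauge B) := by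
  choose T hT using h
  refine ⟨C, .piCongrRight T, fun x => ⟨?_, ?_⟩⟩
  · rw [sumGauge, sumGauge, ← ENNReal.tsum_mul_left]
    exact ENNReal.tsum_le_tsum fun i => (hT i _).1
  · rw [sumGauge, sumGauge, ← ENNReal.tsum_mul_left]
    exact ENNReal.tsum_le_tsum fun i => (hT i _).2

lemma sumGauge_reindex (e : κ ≃ ι) (A : ∀ i, E i → ℝ≥0∞) :
    GaugeEquiv (sumGauge A) (sumGauge fun k => A (e k)) :=
  gaugeEquiv_of_eq (LinearEquiv.piCongrLeft ℝ E e).symm fun x =>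
    e.tsum_eq fun i => A i (x i)

lemma sumGauge_sumType {E : ι ⊕ κ → Type*} [∀ i, AddCommGroup (E i)] [∀ i, Module ℝ (E i)]
    (A : ∀ i, E i → ℝ≥0∞) :
    GaugeEquiv (sumGauge A)
      (prodGauge (sumGauge fun i => A (.inl i)) (sumGauge fun k => A (.inr k))) :=
  gaugeEquiv_of_eq (LinearEquiv.sumPiEquivProdPi ℝ ι κ E) fun x =>
    (Summable.tsum_sum (f := fun i => A i (x i)) ENNReal.summable ENNReal.summable).symm

lemma sumGauge_sigma {κ : ι → Type*} {E : ∀ i, κ i → Type*} [∀ i k, AddCommGroup (E i k)]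
    [∀ i k, Module ℝ (E i k)] (A : ∀ i k, E i k → ℝ≥0∞) :
    GaugeEquiv (sumGauge fun i : Σ i, κ i => A i.1 i.2) (sumGauge fun i => sumGauge (A i)) :=
  gaugeEquiv_of_eq (LinearEquiv.piCurry ℝ E) fun x =>
    (ENNReal.tsum_sigma fun i k => A i k (x ⟨i, k⟩)).symm

lemma sumGauge_prodGauge (A : ∀ i, E i → ℝ≥0∞) (B : ∀ i, F i → ℝ≥0∞) :
    GaugeEquiv (sumGauge fun i => prodGauge (A i) (B i)) (prodGauge (sumGauge A) (sumGauge B)) :=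
  gaugeEquiv_of_eq
    { toFun := fun x => (fun i => (x i).1, fun i => (x i).2)
      invFun := fun x i => (x.1 i, x.2 i)
      map_add' := fun _ _ => rfl
      map_smul' := fun _ _ => rfl } fun _ => ENNReal.tsum_add.symm

lemma sumGauge_unique [Unique ι] (G : V → ℝ≥0∞) :
    GaugeEquiv (sumGauge fun _ : ι => G) G :=
  gaugeEquiv_of_eq (LinearEquiv.funUnique ι ℝ V) fun x => by
    simp [sumGauge, tsum_fintype]

lemma sumGauge_nat_absorb (G : V → ℝ≥0∞) :
    GaugeEquiv (sumGauge fun _ : ℕ => G) (prodGauge G (sumGauge fun _ : ℕ => G)) :=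
  (sumGauge_reindex (nonempty_equiv_of_countable (α := Unit ⊕ ℕ) (β := ℕ)).some fun _ => G).trans <|
    (sumGauge_sumType fun _ => G).trans <| (sumGauge_unique G).prodGauge (.refl _)

/-- **Pełczyński decomposition**: if `G` and `H` are complemented in each other and `H` is
equivalent to its own infinite direct sum, then `G` and `H` are equivalent. -/
lemma GaugeEquiv.of_complemented (hH : GaugeEquiv H (sumGauge fun _ : ℕ => H))
    (hGH : GaugeEquiv (_root_.prodGauge G G') H) (hHG : GaugeEquiv (_root_.prodGauge H H') G) :
    GaugeEquiv G H := by
  have hHH : GaugeEquiv (_root_.prodGauge H H) H :=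
    ((GaugeEquiv.refl H).prodGauge hH).trans ((sumGauge_nat_absorb H).symm.trans hH.symm)
  have hG : GaugeEquiv G (_root_.prodGauge H G) :=
    hHG.symm.trans <| (hHH.symm.prodGauge (.refl _)).trans <|
      (prodGauge_assoc _ _ _).trans <| (GaugeEquiv.refl _).prodGauge hHG
  have hsum : GaugeEquiv H
      (_root_.prodGauge (sumGauge fun _ : ℕ => G) (sumGauge fun _ : ℕ => G')) := by
    obtain ⟨C, hC⟩ := hGH
    exact hH.trans <| (sumGauge_congr fun _ => hC.symm).trans <| sumGauge_prodGauge _ _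
  have hGH' : GaugeEquiv (_root_.prodGauge G H) H :=
    ((GaugeEquiv.refl G).prodGauge hsum).trans <| (prodGauge_assoc _ _ _).symm.trans <|
      ((sumGauge_nat_absorb G).symm.prodGauge (.refl _)).trans hsum.symm
  exact hG.trans <| (prodGauge_comm _ _).trans hGH'

lemma lpGauge_reindex (p : ℝ) (e : ι ≃ κ) : GaugeEquiv (lpGauge p ι) (lpGauge p κ) :=
  sumGauge_reindex e.symm fun _ => scalarGauge p

lemma hilbertGauge_reindex (p : ℝ) (e : ι ≃ κ) :
    GaugeEquivWith 1 (hilbertGauge p ι) (hilbertGauge p κ) :=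
  gaugeEquivWith_of_eq (LinearEquiv.funCongrLeft ℝ ℝ e.symm) fun x => by
    simp only [hilbertGauge, LinearEquiv.funCongrLeft_apply, LinearMap.funLeft_apply]
    rw [e.symm.tsum_eq fun i => ‖x i‖ₑ ^ 2]

lemma hilbertGauge_unique [Unique ι] (p : ℝ) :
    GaugeEquivWith 1 (hilbertGauge p ι) (scalarGauge p) :=
  gaugeEquivWith_of_eq (LinearEquiv.funUnique ι ℝ ℝ) fun x => by
    simp only [hilbertGauge, scalarGauge, tsum_fintype, Fintype.sum_unique,
      LinearEquiv.funUnique_apply, ← ENNReal.rpow_natCast, ← ENNReal.rpow_mul]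
    congr 1
    push_cast
    ring

lemma hilbertGauge_sumType (hp : 2 ≤ p) (ι κ : Type*) :
    GaugeEquivWith (2 ^ (p / 2 - 1)) (hilbertGauge p (ι ⊕ κ))
      (prodGauge (hilbertGauge p ι) (hilbertGauge p κ)) := by
  have hp' : 1 ≤ p / 2 := by linarith
  refine ⟨LinearEquiv.sumPiEquivProdPi ℝ ι κ _, fun x => ?_⟩
  have hx : ∑' j, ‖x j‖ₑ ^ 2 = ∑' i, ‖x (.inl i)‖ₑ ^ 2 + ∑' k, ‖x (.inr k)‖ₑ ^ 2 :=
    Summable.tsum_sum (f := fun j => ‖x j‖ₑ ^ 2) ENNReal.summable ENNReal.summable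
  have h1 : (1 : ℝ≥0) ≤ 2 ^ (p / 2 - 1) := NNReal.one_le_rpow (by norm_num) (by linarith)
  have h2 : ((2 ^ (p / 2 - 1) : ℝ≥0) : ℝ≥0∞) = 2 ^ (p / 2 - 1) := by
    rw [ENNReal.coe_rpow_of_nonneg _ (by linarith)]; rfl
  simp only [hilbertGauge, prodGauge, hx]
  constructor
  · refine (ENNReal.add_rpow_le_rpow_add _ _ hp').trans (le_mul_of_one_le_left' ?_)
    exact_mod_cast h1
  · rw [h2]
    exact ENNReal.rpow_add_le_mul_rpow_add_rpow _ _ hp'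

lemma hilbertGauge_sigma (hp : 2 ≤ p) [Finite ι] (κ : ι → Type*) :
    GaugeEquiv (sumGauge fun i => hilbertGauge p (κ i)) (hilbertGauge p (Σ i, κ i)) := by
  have := Fintype.ofFinite ι
  have hp' : 1 ≤ p / 2 := by linarith
  refine ⟨1 + (Fintype.card ι : ℝ≥0) ^ (p / 2), (LinearEquiv.piCurry ℝ fun i (_ : κ i) => ℝ).symm,
    fun x => ?_⟩
  have hx : ∑' j : Σ i, κ i, ‖(LinearEquiv.piCurry ℝ fun i (_ : κ i) => ℝ).symm x j‖ₑ ^ 2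
      = ∑ i, ∑' k, ‖x i k‖ₑ ^ 2 := by
    rw [← tsum_fintype (L := .unconditional _)]
    exact ENNReal.tsum_sigma' _
  have hc : ((1 + (Fintype.card ι : ℝ≥0) ^ (p / 2) : ℝ≥0) : ℝ≥0∞)
      = 1 + (Fintype.card ι : ℝ≥0∞) ^ (p / 2) := by
    push_cast
    rw [ENNReal.coe_rpow_of_nonneg _ (by linarith)]
    simp
  simp only [hilbertGauge, sumGauge, hx, hc, tsum_fintype]
  set a : ι → ℝ≥0∞ := fun i => ∑' k, ‖x i k‖ₑ ^ 2
  constructor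
  · exact (rpow_sum_le_card_rpow_mul_sum_rpow (by linarith) a).trans
      (mul_le_mul_left le_add_self _)
  · exact (sum_rpow_le_rpow_sum hp' _ a).trans (le_mul_of_one_le_left' le_self_add)

end Gauge

/-- The sign `±1` encoded by a Boolean. -/
def boolSign (b : Bool) : ℝ := bif b then 1 else -1

lemma boolSign_mul_self (b : Bool) : boolSign b * boolSign b = 1 := by
  cases b <;> simp [boolSign]

lemma boolSign_not (b : Bool) : boolSign (!b) = -boolSign b := by
  cases b <;> simp [boolSign]

section Rademacher

variable {S : Type*} [Fintype S] [DecidableEq S]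

lemma card_cube : ∑ _ω : S → Bool, (2 ^ Fintype.card S : ℝ)⁻¹ = 1 := by
  simp

lemma sum_boolSign_mul_boolSign (i j : S) :
    ∑ ω : S → Bool, (2 ^ Fintype.card S : ℝ)⁻¹ * (boolSign (ω i) * boolSign (ω j)) =
      if i = j then 1 else 0 := by
  split_ifs with h
  · subst h
    simp [boolSign_mul_self]
  · have hinv : Function.Involutive fun ω : S → Bool => Function.update ω i (!ω i) := fun ω => by
      simp
    have key := Equiv.sum_comp hinv.toPerm fun ω : S → Bool =>
      (2 ^ Fintype.card S : ℝ)⁻¹ * (boolSign (ω i) * boolSign (ω j))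
    simp only [Function.Involutive.coe_toPerm, Function.update_self, boolSign_not,
      Function.update_of_ne (Ne.symm h), neg_mul, mul_neg, Finset.sum_neg_distrib] at key
    linarith

lemma abs_rpow_le_exp_add_exp_neg {p : ℝ} (hp : 0 < p) (t : ℝ) :
    |t| ^ p ≤ p ^ p * (Real.exp t + Real.exp (-t)) := by
  have h1 : |t| ≤ p * Real.exp (|t| / p) := by
    have := Real.add_one_le_exp (|t| / p)
    rw [← div_le_iff₀' hp]
    linarith
  have h2 : Real.exp |t| ≤ Real.exp t + Real.exp (-t) := by
    rcases abs_choice t with h | h <;> rw [h] <;>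
      linarith [Real.exp_pos t, Real.exp_pos (-t)]
  calc |t| ^ p ≤ (p * Real.exp (|t| / p)) ^ p := by gcongr
    _ = p ^ p * Real.exp |t| := by
      rw [Real.mul_rpow hp.le (Real.exp_pos _).le, ← Real.exp_mul, div_mul_cancel₀ _ hp.ne']
    _ ≤ _ := by gcongr

lemma mean_exp_rademacher_le (a : S → ℝ) :
    ∑ ω : S → Bool, (2 ^ Fintype.card S : ℝ)⁻¹ * Real.exp (∑ i, a i * boolSign (ω i)) ≤
      Real.exp ((∑ i, a i ^ 2) / 2) := by
  have h : ∑ ω : S → Bool, Real.exp (∑ i, a i * boolSign (ω i)) = ∏ i, (2 * Real.cosh (a i)) := by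
    simp_rw [Real.exp_sum]
    rw [← Fintype.prod_sum fun i b => Real.exp (a i * boolSign b)]
    refine Finset.prod_congr rfl fun i _ => ?_
    rw [Fintype.sum_bool, Real.cosh_eq]
    simp [boolSign]
    ring
  rw [← Finset.mul_sum, h, Finset.prod_mul_distrib, Finset.prod_const, Finset.card_univ,
    inv_mul_cancel_left₀ (by positivity), Finset.sum_div, Real.exp_sum]
  exact Finset.prod_le_prod (fun i _ => (Real.cosh_pos _).le) fun i _ =>
    Real.cosh_le_exp_half_sq _

/-- The upper **Khinchine inequality**. -/
lemma khinchine {p : ℝ} (hp : 0 < p) (a : S → ℝ) :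
    ∑ ω : S → Bool, (2 ^ Fintype.card S : ℝ)⁻¹ * |∑ i, a i * boolSign (ω i)| ^ p ≤
      p ^ p * (2 * Real.exp (1 / 2)) * (∑ i, a i ^ 2) ^ (p / 2) := by
  have h0 : 0 ≤ ∑ i, a i ^ 2 := Finset.sum_nonneg fun i _ => sq_nonneg _
  rcases h0.eq_or_lt with h | h
  · have ha : ∀ i, a i = 0 := fun i => by
      simpa using (Finset.sum_eq_zero_iff_of_nonneg fun i _ => sq_nonneg (a i)).1 h.symm i
    simp [ha, Real.zero_rpow hp.ne']
    positivity
  set r := √(∑ i, a i ^ 2) with hr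
  have hr0 : 0 < r := Real.sqrt_pos.2 h
  have hr2 : r ^ 2 = ∑ i, a i ^ 2 := Real.sq_sqrt h0
  have hrp : (∑ i, a i ^ 2) ^ (p / 2) = r ^ p := by
    rw [← hr2, ← Real.rpow_natCast, ← Real.rpow_mul hr0.le]
    congr 1
    push_cast
    ring
  have hb : ∑ i, (a i / r) ^ 2 = 1 := by
    simp_rw [div_pow]
    rw [← Finset.sum_div, hr2, div_self h.ne']
  have hb' : ∑ i, (-(a i / r)) ^ 2 = 1 := by simpa using hb
  have e1 := mean_exp_rademacher_le fun i => a i / r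
  have e2 := mean_exp_rademacher_le fun i => -(a i / r)
  rw [hb] at e1
  rw [hb'] at e2
  have hω : ∀ ω : S → Bool, |∑ i, a i * boolSign (ω i)| ^ p ≤ r ^ p * (p ^ p *
      (Real.exp (∑ i, a i / r * boolSign (ω i)) +
        Real.exp (∑ i, -(a i / r) * boolSign (ω i)))) := fun ω => by
    have e : ∑ i, a i * boolSign (ω i) = r * ∑ i, a i / r * boolSign (ω i) := by
      rw [Finset.mul_sum]
      exact Finset.sum_congr rfl fun i _ => by field_simp
    have e' : ∑ i, -(a i / r) * boolSign (ω i) = -∑ i, a i / r * boolSign (ω i) := by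
      simp [Finset.sum_neg_distrib]
    rw [e, e', abs_mul, abs_of_pos hr0, Real.mul_rpow hr0.le (abs_nonneg _)]
    gcongr
    exact abs_rpow_le_exp_add_exp_neg hp _
  calc _ ≤ ∑ ω : S → Bool, (2 ^ Fintype.card S : ℝ)⁻¹ * (r ^ p * (p ^ p *
      (Real.exp (∑ i, a i / r * boolSign (ω i)) +
        Real.exp (∑ i, -(a i / r) * boolSign (ω i))))) := by
        gcongr with ω
        exact hω ω
    _ = r ^ p * p ^ p * (∑ ω : S → Bool, (2 ^ Fintype.card S : ℝ)⁻¹ *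
          Real.exp (∑ i, a i / r * boolSign (ω i)) + ∑ ω : S → Bool,
          (2 ^ Fintype.card S : ℝ)⁻¹ * Real.exp (∑ i, -(a i / r) * boolSign (ω i))) := by
        rw [← Finset.sum_add_distrib, Finset.mul_sum]
        exact Finset.sum_congr rfl fun ω _ => by ring
    _ ≤ r ^ p * p ^ p * (Real.exp (1 / 2) + Real.exp (1 / 2)) := by gcongr
    _ = _ := by rw [hrp]; ring

/-- The embedding of `ℝ^S` into functions on the cube by Rademacher sums. -/
def rademacherSum (S : Type*) [Fintype S] : (S → ℝ) →ₗ[ℝ] ((S → Bool) → ℝ) where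
  toFun a ω := ∑ i, a i * boolSign (ω i)
  map_add' a b := by ext ω; simp [add_mul, Finset.sum_add_distrib]
  map_smul' c a := by ext ω; simp [mul_assoc, Finset.mul_sum]

/-- The Rademacher coefficients of a function on the cube. -/
def rademacherCoeff (S : Type*) [Fintype S] [DecidableEq S] :
    ((S → Bool) → ℝ) →ₗ[ℝ] (S → ℝ) where
  toFun f i := ∑ ω : S → Bool, (2 ^ Fintype.card S : ℝ)⁻¹ * (boolSign (ω i) * f ω)
  map_add' f g := by ext i; simp [mul_add, Finset.sum_add_distrib]
  map_smul' c f := by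
    ext i
    simp only [Pi.smul_apply, smul_eq_mul, RingHom.id_apply, Finset.mul_sum]
    exact Finset.sum_congr rfl fun ω _ => by ring

lemma rademacherCoeff_rademacherSum (a : S → ℝ) :
    rademacherCoeff S (rademacherSum S a) = a := by
  ext i
  simp only [rademacherCoeff, rademacherSum, LinearMap.coe_mk, AddHom.coe_mk, Finset.mul_sum]
  rw [Finset.sum_comm]
  calc _ = ∑ j, a j * ∑ ω : S → Bool,
        (2 ^ Fintype.card S : ℝ)⁻¹ * (boolSign (ω i) * boolSign (ω j)) := by
        refine Finset.sum_congr rfl fun j _ => ?_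
        rw [Finset.mul_sum]
        exact Finset.sum_congr rfl fun ω _ => by ring
    _ = a i := by simp [sum_boolSign_mul_boolSign]

/-- Bessel's inequality for the Rademacher functions. -/
lemma sum_sq_rademacherCoeff_le (f : (S → Bool) → ℝ) :
    ∑ i, rademacherCoeff S f i ^ 2 ≤
      ∑ ω : S → Bool, (2 ^ Fintype.card S : ℝ)⁻¹ * f ω ^ 2 := by
  set μ : ℝ := (2 ^ Fintype.card S : ℝ)⁻¹ with hμ
  set c := rademacherCoeff S f with hc
  have inner_sum : ∀ g : (S → Bool) → ℝ, ∑ ω, μ * (rademacherSum S c ω * g ω)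
      = ∑ i, c i * rademacherCoeff S g i := fun g => by
    simp only [rademacherCoeff, rademacherSum, LinearMap.coe_mk, AddHom.coe_mk, Finset.mul_sum,
      Finset.sum_mul]
    rw [Finset.sum_comm]
    exact Finset.sum_congr rfl fun i _ => Finset.sum_congr rfl fun ω _ => by ring
  have h1 := inner_sum f
  have h2 := inner_sum (rademacherSum S c)
  rw [rademacherCoeff_rademacherSum] at h2
  have h3 : 0 ≤ ∑ ω, μ * (f ω - rademacherSum S c ω) ^ 2 :=
    Finset.sum_nonneg fun ω _ => by positivity
  have h4 : ∑ ω, μ * (f ω - rademacherSum S c ω) ^ 2 = ∑ ω, μ * f ω ^ 2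
      - 2 * ∑ ω, μ * (rademacherSum S c ω * f ω)
      + ∑ ω, μ * (rademacherSum S c ω * rademacherSum S c ω) := by
    rw [Finset.mul_sum, ← Finset.sum_sub_distrib, ← Finset.sum_add_distrib]
    exact Finset.sum_congr rfl fun ω _ => by ring
  rw [h4, h1, h2, ← hc] at h3
  simp only [pow_two (c _)]
  linarith

lemma rpow_sum_sq_rademacherCoeff_le {p : ℝ} (hp : 2 ≤ p) (f : (S → Bool) → ℝ) :
    (∑ i, rademacherCoeff S f i ^ 2) ^ (p / 2) ≤
      ∑ ω : S → Bool, (2 ^ Fintype.card S : ℝ)⁻¹ * |f ω| ^ p := by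
  calc _ ≤ (∑ ω : S → Bool, (2 ^ Fintype.card S : ℝ)⁻¹ * f ω ^ 2) ^ (p / 2) := by
        gcongr
        exact sum_sq_rademacherCoeff_le f
    _ ≤ ∑ ω : S → Bool, (2 ^ Fintype.card S : ℝ)⁻¹ * (f ω ^ 2) ^ (p / 2) :=
        Real.rpow_arith_mean_le_arith_mean_rpow _ _ _ (fun _ _ => by positivity) card_cube
          (fun _ _ => sq_nonneg _) (by linarith)
    _ = _ := by
        refine Finset.sum_congr rfl fun ω _ => ?_
        rw [← sq_abs, ← Real.rpow_natCast |f ω|, ← Real.rpow_mul (abs_nonneg _)]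
        congr 2
        push_cast
        ring

/-- The `p`-th power of the `L_p`-norm on the cube with its uniform probability measure. -/
def cubeGauge (p : ℝ) (S : Type*) [Fintype S] (f : (S → Bool) → ℝ) : ℝ≥0∞ :=
  ENNReal.ofReal ((2 ^ Fintype.card S : ℝ)⁻¹) * ∑' ω, ‖f ω‖ₑ ^ p

lemma cubeGauge_eq_ofReal {p : ℝ} (hp : 0 < p) (f : (S → Bool) → ℝ) :
    cubeGauge p S f =
      ENNReal.ofReal (∑ ω : S → Bool, (2 ^ Fintype.card S : ℝ)⁻¹ * |f ω| ^ p) := by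
  rw [cubeGauge, ← Finset.mul_sum, ENNReal.ofReal_mul (by positivity),
    ENNReal.ofReal_sum_of_nonneg fun _ _ => by positivity, tsum_fintype]
  congr 1
  refine Finset.sum_congr rfl fun ω _ => ?_
  rw [← ENNReal.ofReal_rpow_of_nonneg (abs_nonneg _) hp.le, Real.enorm_eq_ofReal_abs]

end Rademacher

lemma hilbertGauge_eq_ofReal {S : Type*} [Fintype S] {p : ℝ} (hp : 0 < p) (a : S → ℝ) :
    hilbertGauge p S a = ENNReal.ofReal ((∑ i, a i ^ 2) ^ (p / 2)) := by
  rw [hilbertGauge, ← ENNReal.ofReal_rpow_of_nonneg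
    (Finset.sum_nonneg fun i _ => sq_nonneg _) (by positivity),
    ENNReal.ofReal_sum_of_nonneg fun _ _ => sq_nonneg _, tsum_fintype]
  congr 1
  refine Finset.sum_congr rfl fun ω _ => ?_
  rw [Real.enorm_eq_ofReal_abs, ← ENNReal.ofReal_pow (abs_nonneg _), sq_abs]

lemma cubeGauge_gaugeEquivWith {S : Type*} [Fintype S] {p : ℝ} (hp : 0 < p) :
    GaugeEquivWith 1 (cubeGauge p S) (lpGauge p (S → Bool)) := by
  set s : ℝ := ((2 ^ Fintype.card S : ℝ)⁻¹) ^ p⁻¹ with hs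
  have hs0 : 0 < s := by positivity
  refine gaugeEquivWith_of_eq (LinearEquiv.smulOfNeZero ℝ _ s hs0.ne') fun f => ?_
  simp only [lpGauge, sumGauge, scalarGauge, cubeGauge, LinearEquiv.smulOfNeZero_apply,
    Pi.smul_apply, smul_eq_mul, enorm_mul, ENNReal.mul_rpow_of_nonneg _ _ hp.le]
  rw [ENNReal.tsum_mul_left]
  congr 1
  rw [Real.enorm_eq_ofReal_abs, abs_of_pos hs0, ENNReal.ofReal_rpow_of_pos hs0, hs,
    Real.rpow_inv_rpow (by positivity) hp.ne']

/-- A complemented subspace splits off as a direct summand. -/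
lemma gaugeEquivWith_prodGauge_ker {V V' : Type*} [AddCommGroup V] [Module ℝ V]
    [AddCommGroup V'] [Module ℝ V'] {G : V → ℝ≥0∞} {G' : V' → ℝ≥0∞} {B C : ℝ≥0}
    (hG : ∀ x y, G (x + y) ≤ B * (G x + G y)) (hneg : ∀ x, G (-x) = G x)
    (J : V' →ₗ[ℝ] V) (Q : V →ₗ[ℝ] V') (hQJ : ∀ a, Q (J a) = a)
    (hJ : ∀ a, G (J a) ≤ C * G' a) (hQ : ∀ x, G' (Q x) ≤ G x) :
    GaugeEquivWith (1 + B * (1 + C)) G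
      (prodGauge G' fun v : LinearMap.ker Q => G v) := by
  refine ⟨LinearEquiv.ofLinearMap
    (Q.prod ((LinearMap.id - J ∘ₗ Q).codRestrict _ fun x => by simp [hQJ]))
    (J.coprod (LinearMap.ker Q).subtype) ?_ ?_, fun x => ⟨?_, ?_⟩⟩
  · ext x <;> simp [hQJ]
  · ext x
    simp
  · calc G' (Q x) + G (x - J (Q x)) ≤ G x + B * (G x + C * G x) := by
          refine add_le_add (hQ x) ?_
          rw [sub_eq_add_neg]
          refine (hG _ _).trans ?_
          rw [hneg]
          gcongr
          exact (hJ _).trans (by gcongr; exact hQ x)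
      _ = _ := by push_cast; ring
  · calc G x = G (J (Q x) + (x - J (Q x))) := by simp
      _ ≤ B * (C * G' (Q x) + G (x - J (Q x))) := (hG _ _).trans (by gcongr; exact hJ _)
      _ ≤ B * ((1 + C) * G' (Q x) + (1 + C) * G (x - J (Q x))) := by
          gcongr
          · exact le_add_self
          · exact le_mul_of_one_le_left' le_self_add
      _ = B * (1 + C) * (G' (Q x) + G (x - J (Q x))) := by ring
      _ ≤ (1 + B * (1 + C)) * (G' (Q x) + G (x - J (Q x))) := by gcongr; exact le_add_self
      _ = _ := by simp [prodGauge]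

lemma cubeGauge_add_le {S : Type*} [Fintype S] {p : ℝ} (hp : 1 ≤ p) (f g : (S → Bool) → ℝ) :
    cubeGauge p S (f + g) ≤ (2 ^ (p - 1) : ℝ≥0) * (cubeGauge p S f + cubeGauge p S g) := by
  have h2 : ((2 ^ (p - 1) : ℝ≥0) : ℝ≥0∞) = 2 ^ (p - 1) := by
    rw [ENNReal.coe_rpow_of_nonneg _ (by linarith)]; rfl
  rw [cubeGauge, cubeGauge, cubeGauge, ← mul_add, ← ENNReal.tsum_add, mul_left_comm,
    ← ENNReal.tsum_mul_left (a := ((2 ^ (p - 1) : ℝ≥0) : ℝ≥0∞))]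
  gcongr with ω
  rw [h2]
  refine le_trans ?_ (ENNReal.rpow_add_le_mul_rpow_add_rpow _ _ hp)
  gcongr
  exact enorm_add_le _ _

/-- Finite-dimensional Hilbert spaces are complemented in finite-dimensional `ℓ_p`-spaces,
uniformly in the dimension. -/
lemma exists_hilbertGauge_complemented {p : ℝ} (hp : 2 ≤ p) :
    ∃ C : ℝ≥0, ∀ (S : Type*) [Finite S], ∃ K : Submodule ℝ ((S → Bool) → ℝ),
      ∃ G : K → ℝ≥0∞, GaugeEquivWith C (prodGauge (hilbertGauge p S) G)
        (lpGauge p (S → Bool)) := by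
  classical
  have hp0 : 0 < p := by linarith
  refine ⟨(1 + 2 ^ (p - 1) * (1 + (p ^ p * (2 * Real.exp (1 / 2))).toNNReal)) * 1,
    fun S _ => ?_⟩
  have := Fintype.ofFinite S
  refine ⟨LinearMap.ker (rademacherCoeff S), fun v => cubeGauge p S v, ?_⟩
  refine (gaugeEquivWith_prodGauge_ker (cubeGauge_add_le (by linarith))
    (fun x => by simp [cubeGauge]) (rademacherSum S) (rademacherCoeff S)
    rademacherCoeff_rademacherSum (fun a => ?_) (fun f => ?_)).symm.trans
    (cubeGauge_gaugeEquivWith hp0)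
  · rw [cubeGauge_eq_ofReal hp0, hilbertGauge_eq_ofReal hp0]
    change _ ≤ ENNReal.ofReal _ * _
    rw [← ENNReal.ofReal_mul (by positivity)]
    exact ENNReal.ofReal_le_ofReal (khinchine hp0 a)
  · rw [cubeGauge_eq_ofReal hp0, hilbertGauge_eq_ofReal hp0]
    exact ENNReal.ofReal_le_ofReal (rpow_sum_sq_rademacherCoeff_le hp f)

/-- An infinite `ℓ_p`-sum of nonzero finite-dimensional Hilbert spaces is isomorphic to `ℓ_p`. -/
lemma sumGauge_hilbertGauge_finite {p : ℝ} (hp : 2 ≤ p) {κ : Type*} [Countable κ] [Infinite κ]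
    (S : κ → Type*) [∀ k, Finite (S k)] [∀ k, Nonempty (S k)] :
    GaugeEquiv (sumGauge fun k => hilbertGauge p (S k)) (lpGauge p ℕ) := by
  classical
  have hlp : GaugeEquiv (lpGauge p ℕ) (sumGauge fun _ : ℕ => lpGauge p ℕ) :=
    (lpGauge_reindex p (nonempty_equiv_of_countable (β := Σ _ : ℕ, ℕ)).some).trans <|
      sumGauge_sigma fun _ _ => scalarGauge p
  obtain ⟨C, hC⟩ := exists_hilbertGauge_complemented hp
  choose K G hG using fun k => hC (S k)
  have s : ∀ k, S k := fun k => Classical.arbitrary _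
  refine hlp.of_complemented (G' := sumGauge G)
    (H' := sumGauge fun k => hilbertGauge p {i : S k // i ≠ s k}) ?_ ?_
  · have : Infinite (Σ k, S k → Bool) :=
      .of_injective (fun k => ⟨k, fun _ => true⟩) fun k k' h => by simpa using congrArg Sigma.fst h
    exact (sumGauge_prodGauge _ _).symm.trans <| (sumGauge_congr hG).trans <|
      (sumGauge_sigma fun (k : κ) (_ : S k → Bool) => scalarGauge p).symm.trans <|
      lpGauge_reindex p nonempty_equiv_of_countable.some
  · have hsplit : ∀ k, GaugeEquivWith (1 * 2 ^ (p / 2 - 1)) (hilbertGauge p (S k))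
        (prodGauge (hilbertGauge p {i : S k // i ≠ s k}) (hilbertGauge p PUnit.{1})) := fun k =>
      (hilbertGauge_reindex p ((Equiv.optionSubtypeNe (s k)).symm.trans
        (Equiv.optionEquivSumPUnit _))).trans (hilbertGauge_sumType hp _ _)
    have hκ : GaugeEquiv (sumGauge fun _ : κ => hilbertGauge p PUnit.{1}) (lpGauge p ℕ) :=
      (sumGauge_congr fun _ => hilbertGauge_unique p).trans <|
        lpGauge_reindex p nonempty_equiv_of_countable.some
    exact ((sumGauge_congr hsplit).trans <| (sumGauge_prodGauge _ _).trans <|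
      ((GaugeEquiv.refl _).prodGauge hκ).trans (prodGauge_comm _ _)).symm

/-- The `ℓ_p`-sum of infinitely many copies of `ℓ_2` absorbs countable `ℓ_p`-sums of separable
Hilbert spaces. -/
lemma prodGauge_sumGauge_hilbertGauge_absorb {p : ℝ} (hp : 2 ≤ p) {κ : Type*} [Countable κ]
    (S : κ → Type*) [∀ k, Countable (S k)] :
    GaugeEquiv (prodGauge (sumGauge fun _ : ℕ => hilbertGauge p ℕ)
      (sumGauge fun k => hilbertGauge p (S k))) (sumGauge fun _ : ℕ => hilbertGauge p ℕ) := by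
  have h1 : GaugeEquiv (sumGauge fun _ : ℕ => hilbertGauge p ℕ)
      (prodGauge (sumGauge fun _ : ℕ => hilbertGauge p ℕ)
        (sumGauge fun _ : κ => hilbertGauge p ℕ)) :=
    (sumGauge_reindex (nonempty_equiv_of_countable (α := ℕ ⊕ κ) (β := ℕ)).some
      fun _ => hilbertGauge p ℕ).trans (sumGauge_sumType fun _ => hilbertGauge p ℕ)
  have h2 : GaugeEquiv (sumGauge fun _ : κ => hilbertGauge p ℕ)
      (prodGauge (sumGauge fun _ : κ => hilbertGauge p ℕ)
        (sumGauge fun k => hilbertGauge p (S k))) :=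
    (sumGauge_congr fun k => (hilbertGauge_reindex p
      (nonempty_equiv_of_countable (α := ℕ) (β := ℕ ⊕ S k)).some).trans
      (hilbertGauge_sumType hp ℕ (S k))).trans (sumGauge_prodGauge _ _)
  exact ((h1.trans <| ((GaugeEquiv.refl _).prodGauge h2).trans <|
    (prodGauge_assoc _ _ _).symm).trans (h1.symm.prodGauge (.refl _))).symm

/-- The `p`-th power of `pwNorm`. -/
def pwGauge (p : ℝ) (P : Set (Set α)) (W : α → ℝ) (x : α → ℝ) : ℝ≥0∞ :=
  ∑' N : P, (∑' j : N.1, ENNReal.ofReal ((x j.1) ^ 2 * (W j.1) ^ 2)) ^ (p / 2)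

lemma famNorm_singleton_rpow {p : ℝ} (hp : 0 < p) (P : Set (Set α)) (W : α → ℝ) (x : α → ℝ) :
    famNorm p {(P, W)} x ^ p = pwGauge p P W x := by
  simp only [famNorm, Set.mem_singleton_iff, iSup_iSup_eq_left, pwNorm, pwGauge]
  rw [← ENNReal.rpow_mul, one_div_mul_cancel hp.ne', ENNReal.rpow_one]

/-- A type is the disjoint union of the members of a partition. -/
def IsPartition.sigmaEquiv {P : Set (Set α)} (hP : IsPartition P) : (Σ N : P, N.1) ≃ α :=
  Equiv.ofBijective (fun j => j.2.1) <| by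
    constructor
    · rintro ⟨⟨N, hN⟩, j, hj⟩ ⟨⟨M, hM⟩, k, hk⟩ (rfl : j = k)
      obtain rfl : N = M := hP.2.1.elim_set hN hM j hj hk
      rfl
    · intro a
      obtain ⟨N, hN, ha⟩ : a ∈ ⋃₀ P := hP.2.2 ▸ Set.mem_univ a
      exact ⟨⟨⟨N, hN⟩, a, ha⟩, rfl⟩

lemma pwGauge_gaugeEquiv (p : ℝ) {P : Set (Set α)} {W : α → ℝ} (hP : IsPartition P)
    (hW : IsWeight W) :
    GaugeEquiv (pwGauge p P W) (sumGauge fun N : P => hilbertGauge p N.1) := by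
  have hW0 : ∀ a, W a ≠ 0 := fun a => (hW a).1.ne'
  refine gaugeEquiv_of_eq ((LinearEquiv.piCongrRight fun a =>
    LinearEquiv.smulOfNeZero ℝ ℝ (W a) (hW0 a)).trans <|
    (LinearEquiv.funCongrLeft ℝ ℝ hP.sigmaEquiv).trans <|
    LinearEquiv.piCurry ℝ fun (N : P) (_ : N.1) => ℝ) fun x => ?_
  simp only [sumGauge, hilbertGauge, pwGauge]
  refine tsum_congr fun N => ?_
  congr 1
  refine tsum_congr fun j => ?_
  change ‖W j * x j‖ₑ ^ 2 = _
  rw [Real.enorm_eq_ofReal_abs, ← ENNReal.ofReal_pow (abs_nonneg _), sq_abs, mul_pow, mul_comm]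

/-- A normed space whose norm is comparable with the `p`-th root of a gauge equivalent to
`pwGauge` is isomorphic to the space normed by the partition and weight. -/
lemma isomorphicToPW_of_gaugeEquiv {p : ℝ} (hp : 0 < p) {P : Set (Set α)} {W : α → ℝ}
    {E V : Type*} [NormedAddCommGroup E] [NormedSpace ℝ E] [AddCommGroup V] [Module ℝ V]
    {H : V → ℝ≥0∞} (h : GaugeEquiv (pwGauge p P W) H) (j : E →ₗ[ℝ] V) (D : ℝ≥0)
    (hle : ∀ e, H (j e) ≤ D * ‖e‖ₑ ^ p) (hge : ∀ e, ‖e‖ₑ ^ p ≤ D * H (j e))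
    (hsurj : ∀ v, H v < ⊤ → ∃ e, j e = v) : IsomorphicToPW p {(P, W)} E := by
  classical
  obtain ⟨C, T, hT⟩ := h
  have hH0 : H 0 = 0 := by simpa [hp] using hle 0
  have hj : Function.Injective j := by
    rw [injective_iff_map_eq_zero]
    intro e he
    simpa [he, hH0, hp, hp.le, hp.not_gt] using hge e
  have hfin : ∀ x, famNorm p {(P, W)} x < ⊤ ↔ pwGauge p P W x < ⊤ := fun x => by
    rw [← famNorm_singleton_rpow hp, ENNReal.rpow_lt_top_iff_of_pos hp]
  set R : (α → ℝ) → E := fun x => if h : ∃ e, j e = T x then h.choose else 0 with hR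
  have hjR : ∀ x, (∃ e, j e = T x) → j (R x) = T x := fun x hx => by
    simp only [hR, dif_pos hx]
    exact hx.choose_spec
  have hex : ∀ x, famNorm p {(P, W)} x < ⊤ → ∃ e, j e = T x := fun x hx =>
    hsurj _ ((hT x).1.trans_lt (ENNReal.mul_lt_top ENNReal.coe_lt_top ((hfin x).1 hx)))
  set K : ℝ≥0 := (C * D) ^ p⁻¹ + 1 with hK
  have hKp : ((C * D : ℝ≥0) : ℝ≥0∞) ≤ (K : ℝ≥0∞) ^ p := by
    rw [← ENNReal.coe_rpow_of_nonneg _ hp.le]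
    refine ENNReal.coe_le_coe.2 ?_
    calc C * D = ((C * D) ^ p⁻¹) ^ p := (NNReal.rpow_inv_rpow hp.ne' _).symm
      _ ≤ K ^ p := by gcongr; exact le_self_add
  have hK0 : 0 < K := by positivity
  refine ⟨R, (K⁻¹ : ℝ≥0), K, by positivity, fun x y hx hy => ?_, fun r x hx => ?_, fun e => ?_,
    fun x hx => ⟨?_, ?_⟩⟩
  · have hxy : j (R x + R y) = T (x + y) := by
      rw [map_add, map_add, hjR x (hex x hx), hjR y (hex y hy)]
    exact hj ((hjR _ ⟨_, hxy⟩).trans hxy.symm)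
  · have hrx : j (r • R x) = T (r • x) := by
      rw [map_smul, map_smul, hjR x (hex x hx)]
    exact hj ((hjR _ ⟨_, hrx⟩).trans hrx.symm)
  · have he : j e = T (T.symm (j e)) := by simp
    refine ⟨T.symm (j e), (hfin _).2 ?_, hj ((hjR _ ⟨_, he⟩).trans he.symm)⟩
    refine (hT _).2.trans_lt (ENNReal.mul_lt_top ENNReal.coe_lt_top ?_)
    rw [← he]
    refine (hle e).trans_lt (ENNReal.mul_lt_top ENNReal.coe_lt_top ?_)
    exact ENNReal.rpow_lt_top_of_nonneg hp.le enorm_ne_top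
  · rw [ofReal_norm, ENNReal.ofReal_coe_nnreal, ENNReal.coe_inv hK0.ne', mul_comm,
      ← div_eq_mul_inv]
    refine ENNReal.div_le_of_le_mul' ?_
    rw [← ENNReal.rpow_le_rpow_iff hp, ENNReal.mul_rpow_of_nonneg _ _ hp.le,
      famNorm_singleton_rpow hp]
    calc pwGauge p P W x ≤ C * (D * ‖R x‖ₑ ^ p) :=
          (hT x).2.trans (by gcongr; rw [← hjR x (hex x hx)]; exact hle _)
      _ = (C * D : ℝ≥0) * ‖R x‖ₑ ^ p := by push_cast; ring
      _ ≤ _ := by gcongr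
  · rw [ofReal_norm, ENNReal.ofReal_coe_nnreal, ← ENNReal.rpow_le_rpow_iff hp,
      ENNReal.mul_rpow_of_nonneg _ _ hp.le, famNorm_singleton_rpow hp]
    calc ‖R x‖ₑ ^ p ≤ D * (C * pwGauge p P W x) :=
          (hge _).trans (by gcongr; rw [hjR x (hex x hx)]; exact (hT x).1)
      _ = (C * D : ℝ≥0) * pwGauge p P W x := by push_cast; ring
      _ ≤ _ := by gcongr

section Lp

variable {ι : Type*} {E : ι → Type*} [∀ i, NormedAddCommGroup (E i)] {q : ℝ≥0∞}

lemma lp_enorm_rpow [Fact (1 ≤ q)] (hq : 0 < q.toReal) (f : lp E q) :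
    ‖f‖ₑ ^ q.toReal = ∑' i, ‖f i‖ₑ ^ q.toReal := by
  have h : ∀ {F : Type _} [NormedAddCommGroup F] (x : F),
      ‖x‖ₑ ^ q.toReal = ENNReal.ofReal (‖x‖ ^ q.toReal) := fun x => by
    rw [← ENNReal.ofReal_rpow_of_nonneg (norm_nonneg _) hq.le, ofReal_norm]
  rw [← ofReal_norm, ENNReal.ofReal_rpow_of_nonneg (norm_nonneg _) hq.le,
    lp.norm_rpow_eq_tsum hq, ENNReal.ofReal_tsum_of_nonneg (fun i => by positivity)
      ((lp.memℓp f).summable hq)]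
  exact tsum_congr fun i => (h _).symm

lemma memℓp_of_tsum_enorm_rpow_lt_top {f : ∀ i, E i}
    (hf : ∑' i, ‖f i‖ₑ ^ q.toReal < ⊤) : Memℓp f q := by
  refine memℓp_gen ((ENNReal.summable_toReal hf.ne).congr fun i => ?_)
  rw [← ENNReal.toReal_rpow, toReal_enorm]

end Lp

/-- The inclusion of `lp` into the space of all families. -/
def lpCoe {ι : Type*} (E : ι → Type*) [∀ i, NormedAddCommGroup (E i)] [∀ i, NormedSpace ℝ (E i)]
    (q : ℝ≥0∞) : lp E q →ₗ[ℝ] (∀ i, E i) where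
  toFun f := f
  map_add' _ _ := rfl
  map_smul' _ _ := rfl

lemma lpGauge_lpCoe {ι : Type*} {p : ℝ} (hp : 0 < p) [Fact (1 ≤ ENNReal.ofReal p)]
    (f : lp (fun _ : ι => ℝ) (ENNReal.ofReal p)) :
    lpGauge p ι (lpCoe _ _ f) = ‖f‖ₑ ^ p := by
  have h := lp_enorm_rpow (q := ENNReal.ofReal p) (by simpa [hp.le] using hp) f
  rw [ENNReal.toReal_ofReal hp.le] at h
  exact h.symm

lemma exists_lpCoe_eq_of_lpGauge_lt_top {ι : Type*} {p : ℝ} (hp : 0 < p) {x : ι → ℝ}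
    (hx : lpGauge p ι x < ⊤) : ∃ f, lpCoe _ (ENNReal.ofReal p) f = x := by
  refine ⟨⟨x, memℓp_of_tsum_enorm_rpow_lt_top ?_⟩, rfl⟩
  rwa [ENNReal.toReal_ofReal hp.le]

lemma hilbertGauge_lpCoe {ι : Type*} {p : ℝ} (f : lp (fun _ : ι => ℝ) 2) :
    hilbertGauge p ι (lpCoe _ _ f) = ‖f‖ₑ ^ p := by
  have h := lp_enorm_rpow (q := 2) (by simp) f
  simp only [ENNReal.toReal_ofNat, ENNReal.rpow_ofNat] at h
  have h' : hilbertGauge p ι (lpCoe _ _ f) = (‖f‖ₑ ^ 2) ^ (p / 2) := by rw [h]; rfl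
  rw [h', ← ENNReal.rpow_ofNat, ← ENNReal.rpow_mul]
  congr 1
  ring

lemma exists_lpCoe_eq_of_hilbertGauge_lt_top {ι : Type*} {p : ℝ} (hp : 0 < p) {x : ι → ℝ}
    (hx : hilbertGauge p ι x < ⊤) : ∃ f, lpCoe _ 2 f = x := by
  refine ⟨⟨x, memℓp_of_tsum_enorm_rpow_lt_top ?_⟩, rfl⟩
  simpa using (ENNReal.rpow_lt_top_iff_of_pos (half_pos hp)).1 hx

section Target

variable {P : Set (Set α)} {W : α → ℝ} {p : ℝ}

lemma isomorphicToPW_lp (hp : 0 < p) [Fact (1 ≤ ENNReal.ofReal p)]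
    (h : GaugeEquiv (pwGauge p P W) (lpGauge p ℕ)) :
    IsomorphicToPW p {(P, W)} (lp (fun _ : ℕ => ℝ) (ENNReal.ofReal p)) :=
  isomorphicToPW_of_gaugeEquiv hp h (lpCoe _ _) 1 (fun e => by simp [lpGauge_lpCoe hp])
    (fun e => by simp [lpGauge_lpCoe hp]) fun _ => exists_lpCoe_eq_of_lpGauge_lt_top hp

lemma isomorphicToPW_l2 (hp : 0 < p) (h : GaugeEquiv (pwGauge p P W) (hilbertGauge p ℕ)) :
    IsomorphicToPW p {(P, W)} (lp (fun _ : ℕ => ℝ) 2) :=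
  isomorphicToPW_of_gaugeEquiv hp h (lpCoe _ _) 1 (fun e => by simp [hilbertGauge_lpCoe])
    (fun e => by simp [hilbertGauge_lpCoe]) fun _ => exists_lpCoe_eq_of_hilbertGauge_lt_top hp

lemma isomorphicToPW_l2_prod_lp (hp : 0 < p) [Fact (1 ≤ ENNReal.ofReal p)]
    (h : GaugeEquiv (pwGauge p P W) (prodGauge (hilbertGauge p ℕ) (lpGauge p ℕ))) :
    IsomorphicToPW p {(P, W)}
      ((lp (fun _ : ℕ => ℝ) 2) × (lp (fun _ : ℕ => ℝ) (ENNReal.ofReal p))) := by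
  have hgauge : ∀ e : (lp (fun _ : ℕ => ℝ) 2) × (lp (fun _ : ℕ => ℝ) (ENNReal.ofReal p)),
      prodGauge (hilbertGauge p ℕ) (lpGauge p ℕ) ((lpCoe _ _).prodMap (lpCoe _ _) e) =
        ‖e.1‖ₑ ^ p + ‖e.2‖ₑ ^ p := fun e => by
    simp [prodGauge, hilbertGauge_lpCoe, lpGauge_lpCoe hp]
  refine isomorphicToPW_of_gaugeEquiv hp h ((lpCoe _ _).prodMap (lpCoe _ _)) 2 (fun e => ?_)
    (fun e => ?_) fun v hv => ?_
  · rw [hgauge, ENNReal.coe_ofNat, two_mul]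
    gcongr
    · exact enorm_le_iff_norm_le.2 (norm_fst_le e)
    · exact enorm_le_iff_norm_le.2 (norm_snd_le e)
  · rw [hgauge]
    refine le_trans ?_ (le_mul_of_one_le_left' (by norm_num))
    rcases max_choice ‖e.1‖ ‖e.2‖ with hm | hm <;>
      rw [← ofReal_norm e, Prod.norm_def, hm, ofReal_norm]
    · exact le_self_add
    · exact le_add_self
  · obtain ⟨h1, h2⟩ := ENNReal.add_lt_top.1 hv
    obtain ⟨f, hf⟩ := exists_lpCoe_eq_of_hilbertGauge_lt_top hp h1
    obtain ⟨g, hg⟩ := exists_lpCoe_eq_of_lpGauge_lt_top hp h2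
    exact ⟨(f, g), Prod.ext hf hg⟩

lemma isomorphicToPW_lp_l2 (hp : 0 < p) [Fact (1 ≤ ENNReal.ofReal p)]
    (h : GaugeEquiv (pwGauge p P W) (sumGauge fun _ : ℕ => hilbertGauge p ℕ)) :
    IsomorphicToPW p {(P, W)}
      (lp (fun _ : ℕ => lp (fun _ : ℕ => ℝ) 2) (ENNReal.ofReal p)) := by
  have hq : (ENNReal.ofReal p).toReal = p := ENNReal.toReal_ofReal hp.le
  have hgauge : ∀ e : lp (fun _ : ℕ => lp (fun _ : ℕ => ℝ) 2) (ENNReal.ofReal p),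
      (sumGauge fun _ : ℕ => hilbertGauge p ℕ)
        (((lpCoe (fun _ : ℕ => ℝ) 2).compLeft ℕ ∘ₗ lpCoe _ _) e) = ‖e‖ₑ ^ p := fun e => by
    have he := lp_enorm_rpow (by simpa [hq] using hp) e
    rw [hq] at he
    rw [he]
    exact tsum_congr fun i => hilbertGauge_lpCoe _
  refine isomorphicToPW_of_gaugeEquiv hp h ((lpCoe (fun _ : ℕ => ℝ) 2).compLeft ℕ ∘ₗ lpCoe _ _) 1
    (fun e => by simp only [hgauge]; simp) (fun e => by simp only [hgauge]; simp) fun v hv => ?_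
  have hi : ∀ i, hilbertGauge p ℕ (v i) < ⊤ := fun i =>
    (ENNReal.le_tsum (f := fun i => hilbertGauge p ℕ (v i)) i).trans_lt hv
  choose f hf using fun i => exists_lpCoe_eq_of_hilbertGauge_lt_top hp (hi i)
  refine ⟨⟨f, memℓp_of_tsum_enorm_rpow_lt_top ?_⟩, funext hf⟩
  rw [hq]
  refine lt_of_eq_of_lt (tsum_congr fun i => ?_) hv
  rw [← hf i]
  exact (hilbertGauge_lpCoe _).symm

end Target

/-- For `p > 2`, a space whose norm is given by a single
partition–weight pair on a countably infinite set is isomorphic to `ℓ_p`, `ℓ_2`,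
`ℓ_2 ⊕ ℓ_p` (max norm) or `(Σ ℓ_2)_{ℓ_p}`. -/
theorem statement1 {A : Type*} [Countable A] [Infinite A] (p : ℝ) (hp : 2 < p)
    [Fact (1 ≤ ENNReal.ofReal p)]
    (P : Set (Set A)) (W : A → ℝ) (hP : IsPartition P) (hW : IsWeight W) :
    IsomorphicToPW p {(P, W)} (lp (fun _ : ℕ => ℝ) (ENNReal.ofReal p)) ∨
    IsomorphicToPW p {(P, W)} (lp (fun _ : ℕ => ℝ) 2) ∨
    IsomorphicToPW p {(P, W)}
      ((lp (fun _ : ℕ => ℝ) 2) × (lp (fun _ : ℕ => ℝ) (ENNReal.ofReal p))) ∨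
    IsomorphicToPW p {(P, W)}
      (lp (fun _ : ℕ => lp (fun _ : ℕ => ℝ) 2) (ENNReal.ofReal p)) := by
  classical
  have hp0 : 0 < p := by linarith
  have hsum := pwGauge_gaugeEquiv p hP hW
  have hne : ∀ N : P, Nonempty N.1 := fun N => (hP.1 N.1 N.2).to_subtype
  have hcount : Countable P :=
    have := hP.sigmaEquiv.injective.countable
    Function.Surjective.countable (f := Sigma.fst (β := fun N : P => N.1)) fun N =>
      ⟨⟨N, Classical.arbitrary _⟩, rfl⟩
  rcases finite_or_infinite P with hfin | hinf
  · refine .inr (.inl (isomorphicToPW_l2 hp0 (hsum.trans ((hilbertGauge_sigma hp.le _).trans ?_))))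
    exact (hilbertGauge_reindex p
      (hP.sigmaEquiv.trans nonempty_equiv_of_countable.some)).gaugeEquiv
  have hsplit : GaugeEquiv (pwGauge p P W)
      (prodGauge (sumGauge fun N : {N : P // Infinite N.1} => hilbertGauge p N.1.1)
        (sumGauge fun N : {N : P // ¬ Infinite N.1} => hilbertGauge p N.1.1)) :=
    hsum.trans <| (sumGauge_reindex (Equiv.sumCompl fun N : P => Infinite N.1) _).trans <|
      sumGauge_sumType fun N => hilbertGauge p (Equiv.sumCompl (fun N : P => Infinite N.1) N).1
  have hfinite : ∀ N : {N : P // ¬ Infinite N.1}, Finite N.1.1 := fun N =>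
    not_infinite_iff_finite.1 N.2
  have hinfinite : ∀ N : {N : P // Infinite N.1}, Infinite N.1.1 := fun N => N.2
  have hl2 : GaugeEquiv (sumGauge fun N : {N : P // Infinite N.1} => hilbertGauge p N.1.1)
      (sumGauge fun _ : {N : P // Infinite N.1} => hilbertGauge p ℕ) :=
    sumGauge_congr fun N => hilbertGauge_reindex p nonempty_equiv_of_countable.some
  rcases finite_or_infinite {N : P // Infinite N.1} with hI | hI
  · have : Infinite {N : P // ¬ Infinite N.1} := by
      by_contra hc
      have := not_infinite_iff_finite.1 hc
      exact not_finite_iff_infinite.2 hinf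
        (Finite.of_equiv _ (Equiv.sumCompl fun N : P => Infinite N.1))
    have hlp := sumGauge_hilbertGauge_finite hp.le fun N : {N : P // ¬ Infinite N.1} => N.1.1
    rcases isEmpty_or_nonempty {N : P // Infinite N.1} with hE | hE
    · have : ∀ N : P, Finite N.1 := fun N => not_infinite_iff_finite.1 fun h => hE.elim ⟨N, h⟩
      exact .inl (isomorphicToPW_lp hp0 (hsum.trans (sumGauge_hilbertGauge_finite hp.le _)))
    · refine .inr (.inr (.inl (isomorphicToPW_l2_prod_lp hp0 (hsplit.trans (.prodGauge ?_ hlp)))))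
      exact (hilbertGauge_sigma hp.le _).trans
        (hilbertGauge_reindex p nonempty_equiv_of_countable.some).gaugeEquiv
  · refine .inr (.inr (.inr (isomorphicToPW_lp_l2 hp0 (hsplit.trans <|
      (GaugeEquiv.prodGauge (hl2.trans ?_) (.refl _)).trans
        (prodGauge_sumGauge_hilbertGauge_absorb hp.le _)))))
    exact sumGauge_reindex nonempty_equiv_of_countable.some fun _ => hilbertGauge p ℕ
end
end

section
/- Let p > 2 and let X = X(𝒫) where 𝒫 = {(P_n, W_n) : 1 ≤ n ≤ N} is a finite family of partition–weight pairs on a countable set A. Then X is isomorphic to a subspace of L_p[0,1]: there exist a bounded linear map R : X → L_p([0,1]) and a constant c > 0 with ‖Rx‖_{L_p} ≥ c‖x‖_X for all x ∈ X. -/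
open scoped ENNReal
open MeasureTheory Filter

noncomputable section

variable {α : Type*}

open ProbabilityTheory

/-- The standard Gaussian product measure on `ι → ℝ`. -/
abbrev gaussianPi (ι : Type*) : Measure (ι → ℝ) := Measure.infinitePi fun _ => gaussianReal 0 1

theorem iIndepFun_gaussianPi {ι : Type*} (a : ι → ℝ) :
    iIndepFun (fun i (ω : ι → ℝ) => a i * ω i) (gaussianPi ι) :=
  iIndepFun_infinitePi (X := fun i t => a i * t) (by fun_prop)

theorem map_sum_mul_gaussianPi {ι : Type*} (a : ι → ℝ) (s : Finset ι) :
    (gaussianPi ι).map (fun ω => ∑ i ∈ s, a i * ω i) =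
      gaussianReal 0 (∑ i ∈ s, a i ^ 2).toNNReal := by
  classical
  induction s using Finset.induction_on with
  | empty => simp
  | insert i s hi ih =>
    have hindep := (iIndepFun_gaussianPi a).indepFun_finsetSum_of_notMem
      (fun i => by fun_prop) hi
    have hi' : (gaussianPi ι).map (fun ω => a i * ω i) = gaussianReal 0 (a i ^ 2).toNNReal := by
      rw [← Function.comp_def (fun t => a i * t) (fun ω : ι → ℝ => ω i),
        ← Measure.map_map (by fun_prop) (by fun_prop), Measure.infinitePi_map_eval,
        gaussianReal_map_const_mul]
      congr 1
      · simp
      · ext; simp [sq_nonneg]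
    have := gaussianReal_add_gaussianReal_of_indepFun hindep.symm hi' (by
      convert! ih using 2; ext; simp)
    rw [Finset.sum_insert hi, Real.toNNReal_add (by positivity) (by positivity)]
    simp only [add_zero] at this
    rw [← this]
    congr 1
    ext ω
    simp [Finset.sum_insert hi]

theorem eLpNorm_sum_mul_gaussianPi {ι : Type*} (a : ι → ℝ) (s : Finset ι) (q : ℝ≥0∞) :
    eLpNorm (fun ω => ∑ i ∈ s, a i * ω i) q (gaussianPi ι) =
      ENNReal.ofReal (√(∑ i ∈ s, a i ^ 2)) * eLpNorm id q (gaussianReal 0 1) := by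
  have h1 : eLpNorm (fun ω => ∑ i ∈ s, a i * ω i) q (gaussianPi ι) =
      eLpNorm id q ((gaussianPi ι).map fun ω => ∑ i ∈ s, a i * ω i) := by
    rw [eLpNorm_map_measure (by fun_prop)
      (Finset.measurable_fun_sum s fun i _ => (measurable_pi_apply i).const_mul _).aemeasurable]
    rfl
  have h2 : gaussianReal 0 (∑ i ∈ s, a i ^ 2).toNNReal =
      (gaussianReal 0 1).map (fun t => √(∑ i ∈ s, a i ^ 2) * t) := by
    rw [gaussianReal_map_const_mul]
    congr 1
    · simp
    · ext
      have : 0 ≤ ∑ i ∈ s, a i ^ 2 := by positivity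
      simp [Real.sq_sqrt, this]
  rw [h1, map_sum_mul_gaussianPi, h2, eLpNorm_map_measure (by fun_prop) (by fun_prop)]
  have : (id ∘ fun t : ℝ => √(∑ i ∈ s, a i ^ 2) * t) = √(∑ i ∈ s, a i ^ 2) • id := by
    ext; simp
  rw [this, eLpNorm_const_smul, Real.enorm_of_nonneg (by positivity)]

theorem memLp_eval_gaussianPi {ι : Type*} (i : ι) :
    MemLp (fun ω : ι → ℝ => ω i) 2 (gaussianPi ι) :=
  (memLp_id_gaussianReal' 2 (by simp)).comp_measurePreserving
    (measurePreserving_eval_infinitePi _ i)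

theorem orthonormal_gaussianPi (ι : Type*) :
    Orthonormal ℝ fun i : ι => (memLp_eval_gaussianPi i).toLp := by
  classical
  rw [orthonormal_iff_ite]
  intro i j
  have key : inner ℝ (memLp_eval_gaussianPi i).toLp (memLp_eval_gaussianPi j).toLp =
      ∫ ω, ω i * ω j ∂(gaussianPi ι) := by
    rw [L2.inner_def]
    refine integral_congr_ae ?_
    filter_upwards [(memLp_eval_gaussianPi i).coeFn_toLp, (memLp_eval_gaussianPi j).coeFn_toLp]
      with ω h1 h2
    simp [h1, h2, mul_comm]
  have hmean (k : ι) : ∫ ω, ω k ∂(gaussianPi ι) = 0 := by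
    have := integral_map (μ := gaussianPi ι) (φ := fun ω => ω k) (f := id)
      (measurable_pi_apply k).aemeasurable
      (by fun_prop)
    rw [Measure.infinitePi_map_eval] at this
    simpa using this.symm
  rw [key]
  split_ifs with hij
  · subst hij
    have := integral_map (μ := gaussianPi ι) (φ := fun ω => ω i) (f := fun t => t * t)
      (measurable_pi_apply i).aemeasurable (by fun_prop)
    rw [Measure.infinitePi_map_eval] at this
    rw [← this]
    have h := variance_eq_sub (memLp_id_gaussianReal' (μ := 0) (v := 1) 2 (by simp))
    simp only [variance_id_gaussianReal, id_eq, integral_id_gaussianReal, Pi.pow_apply] at h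
    simpa [sq] using h.symm
  · have hind : IndepFun (fun ω : ι → ℝ => ω i) (fun ω => ω j) (gaussianPi ι) :=
      (iIndepFun_infinitePi (X := fun _ t => t) (by fun_prop)).indepFun hij
    rw [hind.integral_fun_mul_eq_mul_integral (memLp_eval_gaussianPi i).1
      (memLp_eval_gaussianPi j).1, hmean i, zero_mul]

theorem exists_linearMap_l2_Lp_gaussianPi (ι : Type*) [Countable ι] (q : ℝ≥0∞) (hq : 2 ≤ q)
    (hq' : q ≠ ∞) :
    ∃ T : lp (fun _ : ι => ℝ) 2 →ₗ[ℝ] Lp ℝ q (gaussianPi ι), ∀ a,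
      ‖a‖ₑ ≤ ‖T a‖ₑ ∧ ‖T a‖ₑ ≤ eLpNorm id q (gaussianReal 0 1) * ‖a‖ₑ := by
  set Φ := (orthonormal_gaussianPi ι).orthogonalFamily.linearIsometry
  have hbound (a : lp (fun _ : ι => ℝ) 2) :
      eLpNorm (Φ a) q (gaussianPi ι) ≤ eLpNorm id q (gaussianReal 0 1) * ‖a‖ₑ := by
    have hsum := (orthonormal_gaussianPi ι).orthogonalFamily.hasSum_linearIsometry a
    have hmeas := tendstoInMeasure_of_tendsto_Lp hsum
    obtain ⟨u, -, hu⟩ := hmeas.exists_seq_tendsto_ae'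
    refine (Lp.eLpNorm_lim_le_liminf_eLpNorm (fun n => Lp.aestronglyMeasurable _) _ hu).trans ?_
    refine liminf_le_of_le (by isBoundedDefault) fun b hb => ?_
    obtain ⟨n, hn⟩ := hb.exists
    refine hn.trans ?_
    have hae : (((∑ i ∈ u n, LinearIsometry.toSpanSingleton ℝ _
        ((orthonormal_gaussianPi ι).1 i) (a i) : Lp ℝ 2 (gaussianPi ι))) : (ι → ℝ) → ℝ)
        =ᵐ[gaussianPi ι] fun ω => ∑ i ∈ u n, a i * ω i := by
      refine (Lp.coeFn_finsetSum _ _).trans ?_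
      have hterm : ∀ i ∈ u n, (LinearIsometry.toSpanSingleton ℝ _
          ((orthonormal_gaussianPi ι).1 i) (a i) : (ι → ℝ) → ℝ) =ᵐ[gaussianPi ι]
          fun ω => a i * ω i := fun i _ => by
        rw [LinearIsometry.toSpanSingleton_apply]
        filter_upwards [Lp.coeFn_smul (a i) (memLp_eval_gaussianPi i).toLp,
          (memLp_eval_gaussianPi i).coeFn_toLp] with ω h1 h2
        simp [h1, h2]
      filter_upwards [(Finset.eventually_all _).2 hterm] with ω hω
      rw [Finset.sum_apply]
      exact Finset.sum_congr rfl hω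
    rw [eLpNorm_congr_ae hae, eLpNorm_sum_mul_gaussianPi, mul_comm]
    gcongr
    rw [← ofReal_norm]
    refine ENNReal.ofReal_le_ofReal (Real.sqrt_le_iff.2 ⟨norm_nonneg _, ?_⟩)
    have := lp.sum_rpow_le_norm_rpow (p := 2) (by simp) a (u n)
    simpa using this
  have hmem (a) : (Φ a : (ι → ℝ) →ₘ[gaussianPi ι] ℝ) ∈ Lp ℝ q (gaussianPi ι) := by
    rw [Lp.mem_Lp_iff_eLpNorm_lt_top]
    refine (hbound a).trans_lt (ENNReal.mul_lt_top ?_ (by simp))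
    exact (memLp_id_gaussianReal' q hq').2
  refine ⟨{ toFun a := ⟨Φ a, hmem a⟩, map_add' a b := ?_, map_smul' r a := ?_}, fun a => ⟨?_, ?_⟩⟩
  · ext1; simp
  · exact Subtype.ext ((congrArg (Subtype.val : Lp ℝ 2 (gaussianPi ι) → _) (Φ.map_smul r a)).trans
      rfl)
  · rw [← Φ.enorm_map a, Lp.enorm_def, Lp.enorm_def]
    exact eLpNorm_le_eLpNorm_of_exponent_le hq (Lp.aestronglyMeasurable _)
  · rw [Lp.enorm_def]
    exact hbound a

section LpSum

variable {Ω I : Type*} [MeasurableSpace Ω] [MeasurableSpace I]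

/-- The function on `I × Ω` which glues the family `f`, normalised so that its `L^q` norm is the
`ℓ^q` sum of the `L^q` norms of the members of `f`. -/
def glue (q : ℝ) (ν : Measure I) {γ : Measure Ω} {r : ℝ≥0∞} (f : I → Lp ℝ r γ) (z : I × Ω) : ℝ :=
  (ν.real {z.1}) ^ (-(1 / q)) * f z.1 z.2

variable {q : ℝ} {ν : Measure I} {γ : Measure Ω} {r : ℝ≥0∞}

theorem measurable_glue [Countable I] [DiscreteMeasurableSpace I] (f : I → Lp ℝ r γ) :
    Measurable (glue q ν f) :=
  measurable_from_prod_countable_right fun i =>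
    ((Lp.stronglyMeasurable (f i)).measurable.const_mul (ν.real {i} ^ (-(1 / q))) :)

theorem lintegral_enorm_glue_rpow [Countable I] [DiscreteMeasurableSpace I] [IsFiniteMeasure ν]
    [SFinite γ] (hq : 0 < q) (hν : ∀ i, ν {i} ≠ 0) (f : I → Lp ℝ (ENNReal.ofReal q) γ) :
    ∫⁻ z, ‖glue q ν f z‖ₑ ^ q ∂(ν.prod γ) = ∑' i, ‖f i‖ₑ ^ q := by
  rw [lintegral_prod _ ((measurable_glue f).enorm.pow_const _).aemeasurable, lintegral_countable']
  refine tsum_congr fun i => ?_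
  have hpos : 0 < ν.real {i} := ENNReal.toReal_pos (hν i) (measure_ne_top _ _)
  have hnorm : ‖ν.real {i} ^ (-(1 / q))‖ₑ ^ q = (ν {i})⁻¹ := by
    rw [Real.enorm_of_nonneg (by positivity), ENNReal.ofReal_rpow_of_pos (by positivity),
      ← Real.rpow_mul hpos.le]
    have : -(1 / q) * q = -1 := by field_simp
    rw [this, Real.rpow_neg_one, ENNReal.ofReal_inv_of_pos hpos, ofReal_measureReal]
  have hint : ∫⁻ ω, ‖f i ω‖ₑ ^ q ∂γ = ‖f i‖ₑ ^ q := by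
    rw [Lp.enorm_def, eLpNorm_eq_lintegral_rpow_enorm_toReal (by simpa using hq) (by simp),
      ENNReal.toReal_ofReal hq.le, ← ENNReal.rpow_mul, one_div_mul_cancel hq.ne', ENNReal.rpow_one]
  simp only [glue, enorm_mul, ENNReal.mul_rpow_of_nonneg _ _ hq.le, hnorm]
  rw [lintegral_const_mul' _ _ (by simpa using hν i), hint, mul_right_comm,
    ENNReal.inv_mul_cancel (hν i) (measure_ne_top _ _), one_mul]

theorem glue_add [Countable I] [DiscreteMeasurableSpace I] [SFinite ν] [SFinite γ]
    (f g : I → Lp ℝ r γ) : glue q ν (f + g) =ᵐ[ν.prod γ] glue q ν f + glue q ν g := by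
  rw [EventuallyEq, Measure.ae_prod_iff_ae_ae (measurableSet_eq_fun (measurable_glue _)
    ((measurable_glue f).add (measurable_glue g)))]
  refine Eventually.of_forall fun i => ?_
  filter_upwards [Lp.coeFn_add (f i) (g i)] with ω h
  simp only [glue, Pi.add_apply, h, mul_add]

theorem glue_smul [Countable I] [DiscreteMeasurableSpace I] [SFinite ν] [SFinite γ]
    (t : ℝ) (f : I → Lp ℝ r γ) : glue q ν (t • f) =ᵐ[ν.prod γ] t • glue q ν f := by
  rw [EventuallyEq, Measure.ae_prod_iff_ae_ae (measurableSet_eq_fun (measurable_glue _)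
    ((measurable_glue f).const_smul t))]
  refine Eventually.of_forall fun i => ?_
  filter_upwards [Lp.coeFn_smul t (f i)] with ω h
  simp [glue, h, mul_left_comm]

end LpSum

theorem exists_map_lpSum_Lp_unitInterval {Ω : Type*} [MeasurableSpace Ω] [StandardBorelSpace Ω]
    (γ : Measure Ω) [IsProbabilityMeasure γ] (I : Type*) [Countable I] (q : ℝ) (hq : 0 < q)
    [Fact (1 ≤ ENNReal.ofReal q)] :
    ∃ S : (I → Lp ℝ (ENNReal.ofReal q) γ) →
        Lp ℝ (ENNReal.ofReal q) (volume : Measure ↥(Set.Icc (0 : ℝ) 1)),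
      (∀ f g, ∑' i, ‖f i‖ₑ ^ q < ∞ → ∑' i, ‖g i‖ₑ ^ q < ∞ → S (f + g) = S f + S g) ∧
      (∀ (t : ℝ) f, ∑' i, ‖f i‖ₑ ^ q < ∞ → S (t • f) = t • S f) ∧
      (∀ f, ∑' i, ‖f i‖ₑ ^ q < ∞ → ‖S f‖ₑ ^ q = ∑' i, ‖f i‖ₑ ^ q) := by
  classical
  cases isEmpty_or_nonempty I with
  | inl _ => exact ⟨0, by simp, by simp, by simp [hq]⟩
  | inr _ =>
    let _ : MeasurableSpace I := ⊤
    have : DiscreteMeasurableSpace I := ⟨fun _ => trivial⟩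
    set ν : Measure I := Measure.count.toFinite
    have : NeZero (Measure.count : Measure I) := ⟨by simp [Measure.count_ne_zero'']⟩
    have hν (i : I) : ν {i} ≠ 0 := by simp [ν, toFinite_apply_eq_zero_iff]
    have : Nonempty Ω := γ.nonempty_of_neZero
    obtain ⟨φ, hφm, hφ⟩ := (ν.prod γ).exists_measurable_map_eq
    have hφ' : MeasurePreserving φ volume (ν.prod γ) := ⟨hφm, hφ⟩
    have hnorm (f : I → Lp ℝ (ENNReal.ofReal q) γ) :
        eLpNorm (glue q ν f) (ENNReal.ofReal q) (ν.prod γ) ^ q = ∑' i, ‖f i‖ₑ ^ q := by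
      rw [← lintegral_enorm_glue_rpow hq hν, eLpNorm_eq_lintegral_rpow_enorm_toReal
        (by simpa using hq) (by simp), ENNReal.toReal_ofReal hq.le, ← ENNReal.rpow_mul,
        one_div_mul_cancel hq.ne', ENNReal.rpow_one]
    have hmem (f : I → Lp ℝ (ENNReal.ofReal q) γ) (hf : ∑' i, ‖f i‖ₑ ^ q < ∞) :
        MemLp (glue q ν f) (ENNReal.ofReal q) (ν.prod γ) := by
      refine ⟨(measurable_glue f).aestronglyMeasurable, ?_⟩
      rwa [← hnorm, ENNReal.rpow_lt_top_iff_of_pos hq] at hf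
    let S (f : I → Lp ℝ (ENNReal.ofReal q) γ) :=
      if h : MemLp (glue q ν f) (ENNReal.ofReal q) (ν.prod γ) then
        Lp.compMeasurePreserving φ hφ' h.toLp else 0
    have hS f (h : MemLp (glue q ν f) (ENNReal.ofReal q) (ν.prod γ)) :
        S f = Lp.compMeasurePreserving φ hφ' h.toLp := dif_pos h
    refine ⟨S, fun f g hf hg => ?_, fun t f hf => ?_, fun f hf => ?_⟩
    · have hadd := ((hmem f hf).add (hmem g hg)).ae_eq (glue_add f g).symm
      rw [hS _ (hmem f hf), hS _ (hmem g hg), hS _ hadd, ← map_add, ← MemLp.toLp_add]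
      exact congrArg _ ((MemLp.toLp_eq_toLp_iff _ _).2 (glue_add f g))
    · have hsmul := ((hmem f hf).const_smul t).ae_eq (glue_smul t f).symm
      rw [hS _ (hmem f hf), hS _ hsmul]
      refine Eq.trans ?_ ((Lp.compMeasurePreservingₗ ℝ φ hφ').map_smul t _)
      rw [← MemLp.toLp_const_smul]
      exact congrArg _ ((MemLp.toLp_eq_toLp_iff _ _).2 (glue_smul t f))
    · rw [hS _ (hmem f hf), ← hnorm, ← ofReal_norm, Lp.norm_compMeasurePreserving, ofReal_norm,
        Lp.enorm_toLp]

theorem memℓp_two_of_tsum_ne_top {ι : Type*} {y : ι → ℝ}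
    (hy : ∑' j, ENNReal.ofReal (y j ^ 2) ≠ ∞) : Memℓp y 2 := by
  rw [memℓp_gen_iff (by simp)]
  have := ENNReal.summable_toReal hy
  simpa [ENNReal.toReal_ofReal, sq_nonneg] using this

theorem enorm_l2_sq {ι : Type*} (y : lp (fun _ : ι => ℝ) 2) :
    ‖y‖ₑ ^ (2 : ℝ) = ∑' j, ENNReal.ofReal (y j ^ 2) := by
  have h := lp.hasSum_norm (p := 2) (by simp) y
  simp only [ENNReal.toReal_ofNat, Real.rpow_ofNat, Real.norm_eq_abs, sq_abs] at h
  rw [← ENNReal.ofReal_tsum_of_nonneg (fun j => sq_nonneg _) h.summable, h.tsum_eq,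
    ← ofReal_norm, ENNReal.ofReal_rpow_of_nonneg (norm_nonneg _) (by simp), Real.rpow_ofNat]

theorem IsPartition.countable {A : Type*} [Countable A] {P : Set (Set A)} (hP : IsPartition P) :
    Countable P := by
  choose e he using fun N : P => hP.1 N.1 N.2
  refine Function.Injective.countable (f := e) fun M N hMN => Subtype.ext ?_
  exact hP.2.1.elim_set M.2 N.2 (e M) (he M) (hMN ▸ he N)

/-- The restriction of `x * W` to the block `N`. -/
def blockFun {A : Type*} (N : Set A) (W x : A → ℝ) : A → ℝ := N.indicator fun j => x j * W j

theorem tsum_blockFun {A : Type*} (N : Set A) (W x : A → ℝ) :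
    ∑' j, ENNReal.ofReal (blockFun N W x j ^ 2) =
      ∑' j : N, ENNReal.ofReal (x j ^ 2 * W j ^ 2) := by
  rw [tsum_subtype N fun j => ENNReal.ofReal (x j ^ 2 * W j ^ 2)]
  refine tsum_congr fun j => ?_
  by_cases hj : j ∈ N <;> simp [blockFun, hj, mul_pow]

open Classical in
/-- `blockFun` as an element of `ℓ²`, with value zero if it is not square summable. -/
def blockVec {A : Type*} (N : Set A) (W x : A → ℝ) : lp (fun _ : A => ℝ) 2 :=
  if h : Memℓp (blockFun N W x) 2 then ⟨_, h⟩ else 0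

theorem coe_blockVec {A : Type*} {N : Set A} {W x : A → ℝ} (h : Memℓp (blockFun N W x) 2) :
    ⇑(blockVec N W x) = blockFun N W x := by
  rw [blockVec, dif_pos h]

theorem blockFun_add {A : Type*} (N : Set A) (W x y : A → ℝ) :
    blockFun N W (x + y) = blockFun N W x + blockFun N W y := by
  ext j
  by_cases hj : j ∈ N <;> simp [blockFun, hj, add_mul]

theorem blockFun_smul {A : Type*} (N : Set A) (W : A → ℝ) (r : ℝ) (x : A → ℝ) :
    blockFun N W (r • x) = r • blockFun N W x := by
  ext j
  by_cases hj : j ∈ N <;> simp [blockFun, hj, mul_assoc]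

theorem blockVec_add {A : Type*} {N : Set A} {W x y : A → ℝ} (hx : Memℓp (blockFun N W x) 2)
    (hy : Memℓp (blockFun N W y) 2) :
    blockVec N W (x + y) = blockVec N W x + blockVec N W y := by
  apply Subtype.ext
  have h : Memℓp (blockFun N W (x + y)) 2 := by
    rw [blockFun_add]
    exact hx.add hy
  rw [lp.coeFn_add, coe_blockVec hx, coe_blockVec hy, coe_blockVec h, blockFun_add]

theorem blockVec_smul {A : Type*} {N : Set A} {W x : A → ℝ} (hx : Memℓp (blockFun N W x) 2)
    (r : ℝ) : blockVec N W (r • x) = r • blockVec N W x := by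
  apply Subtype.ext
  have h : Memℓp (blockFun N W (r • x)) 2 := by
    rw [blockFun_smul]
    exact hx.const_smul r
  rw [lp.coeFn_smul, coe_blockVec hx, coe_blockVec h, blockFun_smul]

theorem pwNorm_rpow {A : Type*} {p : ℝ} (hp : p ≠ 0) (P : Set (Set A)) (W x : A → ℝ) :
    pwNorm p P W x ^ p =
      ∑' N : P, (∑' j : N.1, ENNReal.ofReal ((x j.1) ^ 2 * (W j.1) ^ 2)) ^ (p / 2) := by
  rw [pwNorm, ← ENNReal.rpow_mul, one_div_mul_cancel hp, ENNReal.rpow_one]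

theorem pwNorm_le_famNorm {A : Type*} (p : ℝ) {𝒞 : Set (PWPair A)} {PW : PWPair A}
    (h : PW ∈ 𝒞) (x : A → ℝ) : pwNorm p PW.1 PW.2 x ≤ famNorm p 𝒞 x :=
  le_iSup₂ (f := fun (PW : PWPair A) (_ : PW ∈ 𝒞) => pwNorm p PW.1 PW.2 x) PW h

theorem memℓp_blockFun {A : Type*} {p : ℝ} (hp : 0 < p) {P : Set (Set A)} {W x : A → ℝ}
    (h : pwNorm p P W x < ∞) {N : Set A} (hN : N ∈ P) : Memℓp (blockFun N W x) 2 := by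
  apply memℓp_two_of_tsum_ne_top
  rw [tsum_blockFun]
  have hfin := ENNReal.rpow_lt_top_of_nonneg hp.le h.ne
  rw [pwNorm_rpow hp.ne'] at hfin
  have hle := (ENNReal.le_tsum (⟨N, hN⟩ : P)).trans_lt hfin
  exact ((ENNReal.rpow_lt_top_iff_of_pos (by positivity)).1 hle).ne

theorem tsum_enorm_blockVec_rpow {A : Type*} {p : ℝ} (hp : 0 < p) {P : Set (Set A)}
    {W x : A → ℝ} (h : pwNorm p P W x < ∞) :
    ∑' N : P, ‖blockVec N.1 W x‖ₑ ^ p = pwNorm p P W x ^ p := by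
  rw [pwNorm_rpow hp.ne']
  refine tsum_congr fun N => ?_
  rw [← tsum_blockFun, ← coe_blockVec (memℓp_blockFun hp h N.2), ← enorm_l2_sq,
    ← ENNReal.rpow_mul, mul_div_cancel₀ _ two_ne_zero]

/-- For `p > 2`, a space `X(𝒞)` whose norm is given by finitely many
partitions and weights is isomorphic to a subspace of `L_p[0,1]`: there is a map `R`
into `L_p([0,1])`, additive and homogeneous on `X(𝒞)`, bounded above, and bounded
below by some `c > 0`. -/
theorem statement4 {A : Type*} [Countable A] (p : ℝ) (hp : 2 < p)
    [Fact (1 ≤ ENNReal.ofReal p)]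
    (𝒞 : Set (PWPair A)) (h𝒞 : IsPWFamily 𝒞) (hfin : 𝒞.Finite) :
    ∃ (R : (A → ℝ) → MeasureTheory.Lp ℝ (ENNReal.ofReal p)
        (volume : Measure ↥(Set.Icc (0 : ℝ) 1))) (c C : ℝ), 0 < c ∧
      (∀ x y, famNorm p 𝒞 x < ⊤ → famNorm p 𝒞 y < ⊤ → R (x + y) = R x + R y) ∧
      (∀ (r : ℝ) (x), famNorm p 𝒞 x < ⊤ → R (r • x) = r • R x) ∧
      (∀ x, famNorm p 𝒞 x < ⊤ →
        ENNReal.ofReal ‖R x‖ ≤ ENNReal.ofReal C * famNorm p 𝒞 x ∧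
        ENNReal.ofReal c * famNorm p 𝒞 x ≤ ENNReal.ofReal ‖R x‖) := by
  have hp0 : 0 < p := by linarith
  have := hfin.to_subtype
  have hcount (PW : 𝒞) : Countable PW.1.1 := (h𝒞 _ PW.2).1.countable
  obtain ⟨T, hT⟩ := exists_linearMap_l2_Lp_gaussianPi A (ENNReal.ofReal p)
    (by simpa using ENNReal.ofReal_le_ofReal hp.le) ENNReal.ofReal_ne_top
  set K : ℝ≥0∞ := eLpNorm id (ENNReal.ofReal p) (gaussianReal 0 1)
  have hK : K ≠ ∞ := (memLp_id_gaussianReal' _ ENNReal.ofReal_ne_top).2.ne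
  obtain ⟨S, hadd, hsmul, hnorm⟩ := exists_map_lpSum_Lp_unitInterval (gaussianPi A)
    (Σ PW : 𝒞, PW.1.1) p hp0
  let v (x : A → ℝ) (i : Σ PW : 𝒞, PW.1.1) := T (blockVec i.2.1 i.1.1.2 x)
  have hlt {x} (hx : famNorm p 𝒞 x < ⊤) (PW : 𝒞) : pwNorm p PW.1.1 PW.1.2 x < ⊤ :=
    (pwNorm_le_famNorm p PW.2 x).trans_lt hx
  have hmem {x} (hx : famNorm p 𝒞 x < ⊤) (i : Σ PW : 𝒞, PW.1.1) :
      Memℓp (blockFun i.2.1 i.1.1.2 x) 2 := memℓp_blockFun hp0 (hlt hx i.1) i.2.2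
  have hsum {x} (hx : famNorm p 𝒞 x < ⊤) :
      ∑' i : Σ PW : 𝒞, PW.1.1, ‖blockVec i.2.1 i.1.1.2 x‖ₑ ^ p =
        ∑' PW : 𝒞, pwNorm p PW.1.1 PW.1.2 x ^ p := by
    rw [ENNReal.tsum_sigma']
    refine tsum_congr fun PW => ?_
    exact tsum_enorm_blockVec_rpow (P := PW.1.1) (W := PW.1.2) hp0 (hlt hx PW)
  have hupper {x} (hx : famNorm p 𝒞 x < ⊤) :
      ∑' i, ‖v x i‖ₑ ^ p ≤ K ^ p * (Nat.card 𝒞 * famNorm p 𝒞 x ^ p) := calc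
    ∑' i, ‖v x i‖ₑ ^ p
      ≤ ∑' i : Σ PW : 𝒞, PW.1.1, K ^ p * ‖blockVec i.2.1 i.1.1.2 x‖ₑ ^ p := by
        refine ENNReal.tsum_le_tsum fun i => ?_
        rw [← ENNReal.mul_rpow_of_nonneg _ _ hp0.le]
        exact ENNReal.rpow_le_rpow (hT _).2 hp0.le
    _ = K ^ p * ∑' PW : 𝒞, pwNorm p PW.1.1 PW.1.2 x ^ p := by rw [ENNReal.tsum_mul_left, hsum hx]
    _ ≤ K ^ p * ∑' _ : 𝒞, famNorm p 𝒞 x ^ p := by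
        refine mul_le_mul' le_rfl (ENNReal.tsum_le_tsum fun PW => ?_)
        exact ENNReal.rpow_le_rpow (pwNorm_le_famNorm p PW.2 x) hp0.le
    _ = K ^ p * (Nat.card 𝒞 * famNorm p 𝒞 x ^ p) := by
        rw [ENNReal.tsum_const, ENat.card_eq_coe_natCard, ENat.toENNReal_coe]
  have hfinite {x} (hx : famNorm p 𝒞 x < ⊤) : ∑' i, ‖v x i‖ₑ ^ p < ∞ :=
    (hupper hx).trans_lt <| ENNReal.mul_lt_top (ENNReal.rpow_lt_top_of_nonneg hp0.le hK) <|
      ENNReal.mul_lt_top (by simp) (ENNReal.rpow_lt_top_of_nonneg hp0.le hx.ne)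
  refine ⟨fun x => S (v x), 1, K.toReal * (Nat.card 𝒞 : ℝ) ^ (1 / p), one_pos,
    fun x y hx hy => ?_, fun r x hx => ?_, fun x hx => ⟨?_, ?_⟩⟩
  · simp only
    rw [← hadd _ _ (hfinite hx) (hfinite hy)]
    congr 1
    ext1 i
    simp only [v, blockVec_add (hmem hx i) (hmem hy i), map_add, Pi.add_apply]
  · simp only
    rw [← hsmul _ _ (hfinite hx)]
    congr 1
    ext1 i
    simp only [v, blockVec_smul (hmem hx i), map_smul, Pi.smul_apply]
  · rw [ofReal_norm, ← ENNReal.rpow_le_rpow_iff hp0, hnorm _ (hfinite hx)]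
    refine (hupper hx).trans_eq ?_
    rw [ENNReal.mul_rpow_of_nonneg _ _ hp0.le, ENNReal.ofReal_mul ENNReal.toReal_nonneg,
      ENNReal.ofReal_toReal hK, ENNReal.mul_rpow_of_nonneg _ _ hp0.le,
      ENNReal.ofReal_rpow_of_nonneg (by positivity) hp0.le, ← Real.rpow_mul (by positivity),
      one_div_mul_cancel hp0.ne', Real.rpow_one, ENNReal.ofReal_natCast, mul_assoc]
  · rw [ofReal_norm, ENNReal.ofReal_one, one_mul]
    refine iSup₂_le fun PW hPW => ?_
    rw [← ENNReal.rpow_le_rpow_iff hp0, hnorm _ (hfinite hx)]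
    calc pwNorm p PW.1 PW.2 x ^ p
        ≤ ∑' PW : 𝒞, pwNorm p PW.1.1 PW.1.2 x ^ p :=
          ENNReal.le_tsum (f := fun PW : 𝒞 => pwNorm p PW.1.1 PW.1.2 x ^ p) ⟨PW, hPW⟩
      _ = ∑' i : Σ PW : 𝒞, PW.1.1, ‖blockVec i.2.1 i.1.1.2 x‖ₑ ^ p := (hsum hx).symm
      _ ≤ ∑' i, ‖v x i‖ₑ ^ p :=
          ENNReal.tsum_le_tsum fun i => ENNReal.rpow_le_rpow (hT _).1 hp0.le
end
end
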